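/- Every packing of the Euclidean plane by disks of radius 1 has density at most π/√12. -/

import Mathlib

open Metric Set

noncomputable section

/-- The Euclidean plane. -/
abbrev Plane : Type := EuclideanSpace ℝ (Fin 2)

/-- A closed disk in the plane, given by its center and (positive) radius. -/
structure Disk where
  center : Plane
  radius : ℝ
  radius_pos : 0 < radius

/-- The set of points of a disk (a closed ball). -/
def Disk.set (d : Disk) : Set Plane := closedBall d.center d.radius

/-- A packing: a family of closed disks with pairwise disjoint interiors. -/
def IsPacking (P : Set Disk) : Prop :=
  ∀ d ∈ P, ∀ d' ∈ P, d ≠ d' → Disjoint (interior d.set) (interior d'.set)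

/-- Two disks are (externally) tangent: they intersect in exactly one point. -/
def Disk.Tangent (d d' : Disk) : Prop :=
  dist d.center d'.center = d.radius + d'.radius

/-- The union of the disks of a packing. -/
def packingUnion (P : Set Disk) : Set Plane := ⋃ d ∈ P, d.set

/-- A packing is compact (triangulated) if every connected component of the
complement of the union of the disks is bounded and its closure meets exactly
three of the disks, these three disks being pairwise tangent. -/
def IsCompactPacking (P : Set Disk) : Prop :=
  IsPacking P ∧
  ∀ x ∈ (packingUnion P)ᶜ,
    Bornology.IsBounded (connectedComponentIn (packingUnion P)ᶜ x) ∧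
    ∃ d₁ d₂ d₃ : Disk, d₁ ∈ P ∧ d₂ ∈ P ∧ d₃ ∈ P ∧
      d₁ ≠ d₂ ∧ d₁ ≠ d₃ ∧ d₂ ≠ d₃ ∧
      d₁.Tangent d₂ ∧ d₁.Tangent d₃ ∧ d₂.Tangent d₃ ∧
      {d ∈ P | (closure (connectedComponentIn (packingUnion P)ᶜ x) ∩ d.set).Nonempty}
        = {d₁, d₂, d₃}

/-- A packing uses the radius `r` if one of its disks has radius `r`. -/
def UsesRadius (P : Set Disk) (r : ℝ) : Prop := ∃ d ∈ P, d.radius = r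

/-- All radii of the disks of `P` belong to `S`. -/
def RadiiIn (P : Set Disk) (S : Set ℝ) : Prop := ∀ d ∈ P, d.radius ∈ S

/-- The square `[-r, r]²`. -/
def square (r : ℝ) : Set Plane := {x | |x 0| ≤ r ∧ |x 1| ≤ r}

/-- The density of a packing: the limsup, as `r → ∞`, of the proportion of the
square `[-r, r]²` covered by the disks. -/
def density (P : Set Disk) : ℝ :=
  Filter.limsup
    (fun r : ℝ => (MeasureTheory.volume (packingUnion P ∩ square r)).toReal / (4 * r ^ 2))
    Filter.atTop

end

/-!
Cut the Voronoi cell of each disk of radius `ρ` off at distance `R = 2 * ρ / √3` from its centre,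
the circumradius of the regular hexagon circumscribed to the disk. The radii of length `R` whose
endpoint is nearer to a given other centre form a sector, of half-angle `α ≤ π / 6` because the
centres are at least `2 * ρ = √3 * R` apart. A Leibniz-type inequality for the squares of the
distances shows that the sectors towards two other centres are disjoint. Outside the sectors the
cell fills the ball of radius `R`; in a sector it keeps a triangle, a fraction
`sin α * cos α / α ≥ 3 * √3 / (2 * π)` of the area by concavity of the sine. That bound is the share
of a regular hexagon in its circumscribed disk, so every cell has area at least
`3 * √3 / 2 * R ^ 2 = √12 * ρ ^ 2`. The cells are disjoint, and those of the disks meeting a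
square lie in a slightly larger square, whose area is asymptotically the same.
-/

section ComplexSector

open MeasureTheory Real

/-- The open sector of radius `R` and half-angle `α` about the positive real axis. -/
def circularSector (R α : ℝ) : Set ℂ := ball 0 R ∩ {z | ‖z‖ * cos α < z.re}

lemma measurableSet_circularSector (R α : ℝ) : MeasurableSet (circularSector R α) :=
  measurableSet_ball.inter (measurableSet_lt (by fun_prop) (by fun_prop))

lemma polarCoord_symm_mem_circularSector_iff {R α : ℝ} (hα₀ : 0 ≤ α) (hα : α ≤ π) {p : ℝ × ℝ}
    (hp : p ∈ polarCoord.target) :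
    Complex.polarCoord.symm p ∈ circularSector R α ↔ p ∈ Ioo 0 R ×ˢ Ioo (-α) α := by
  obtain ⟨r, θ⟩ := p
  obtain ⟨hr : 0 < r, hθ : -π < θ ∧ θ < π⟩ := hp
  have hcos : cos α < cos θ ↔ |θ| < α := by
    rw [← cos_abs θ]
    exact strictAntiOn_cos.lt_iff_gt ⟨hα₀, hα⟩ ⟨abs_nonneg θ, (abs_lt.2 hθ).le⟩
  have hre : (Complex.polarCoord.symm (r, θ)).re = r * cos θ := by
    simp [Complex.polarCoord_symm_apply, Complex.cos_ofReal_re]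
  simp only [circularSector, mem_inter_iff, mem_ball_zero_iff, mem_ofPred_eq,
    Complex.norm_polarCoord_symm, abs_of_pos hr, hre, mul_lt_mul_iff_right₀ hr,
    hcos, mem_prod, mem_Ioo, abs_lt, hr, true_and]

lemma lintegral_Ioo_zero_ofReal {R : ℝ} (hR : 0 ≤ R) :
    ∫⁻ r in Ioo 0 R, ENNReal.ofReal r = ENNReal.ofReal (R ^ 2 / 2) := by
  have hint : IntegrableOn (fun r : ℝ => r) (Ioo 0 R) :=
    continuous_id'.integrableOn_Icc.mono_set Ioo_subset_Icc_self
  rw [← ofReal_integral_eq_lintegral_ofReal hint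
    ((ae_restrict_mem measurableSet_Ioo).mono fun r hr => hr.1.le),
    ← integral_Ioc_eq_integral_Ioo, ← intervalIntegral.integral_of_le hR]
  simp

lemma volume_circularSector {R α : ℝ} (hR : 0 ≤ R) (hα₀ : 0 ≤ α) (hα : α ≤ π) :
    volume (circularSector R α) = ENNReal.ofReal (R ^ 2 * α) := by
  have hsub : Ioo 0 R ×ˢ Ioo (-α) α ⊆ polarCoord.target := fun p hp =>
    ⟨hp.1.1, by linarith [hp.2.1], by linarith [hp.2.2]⟩
  have hmeas : MeasurableSet (Ioo 0 R ×ˢ Ioo (-α) α) := measurableSet_Ioo.prod measurableSet_Ioo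
  calc volume (circularSector R α)
      = ∫⁻ p in polarCoord.target,
          ENNReal.ofReal p.1 • (circularSector R α).indicator 1 (Complex.polarCoord.symm p) := by
        rw [Complex.lintegral_comp_polarCoord_symm,
          lintegral_indicator_one (measurableSet_circularSector R α)]
    _ = ∫⁻ p in polarCoord.target,
          (Ioo 0 R ×ˢ Ioo (-α) α).indicator (fun p => ENNReal.ofReal p.1) p := by
        refine setLIntegral_congr_fun polarCoord.open_target.measurableSet fun p hp => ?_
        simp only [indicator, polarCoord_symm_mem_circularSector_iff hα₀ hα hp, smul_eq_mul,
          Pi.one_apply, mul_ite, mul_one, mul_zero]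
    _ = ∫⁻ p in Ioo 0 R ×ˢ Ioo (-α) α, ENNReal.ofReal p.1 := by
        rw [setLIntegral_indicator hmeas, inter_eq_left.2 hsub]
    _ = (∫⁻ r in Ioo 0 R, ENNReal.ofReal r) * ENNReal.ofReal (2 * α) := by
        rw [Measure.volume_eq_prod, setLIntegral_prod _ (by fun_prop)]
        simp only [lintegral_const, MeasurableSet.univ, Measure.restrict_apply, univ_inter,
          Real.volume_Ioo]
        rw [lintegral_mul_const _ (by fun_prop), sub_neg_eq_add, ← two_mul]
    _ = ENNReal.ofReal (R ^ 2 * α) := by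
        rw [lintegral_Ioo_zero_ofReal hR, ← ENNReal.ofReal_mul (by positivity)]
        ring_nf

lemma norm_mul_cos_lt_re_iff {α : ℝ} (hα₀ : 0 ≤ α) (hα : α < π / 2) {z : ℂ} (hz : 0 < z.re) :
    ‖z‖ * cos α < z.re ↔ |z.im| < tan α * z.re := by
  have hcos : 0 < cos α := cos_pos_of_mem_Ioo ⟨by linarith [pi_pos], hα⟩
  have hsin : 0 ≤ sin α := sin_nonneg_of_nonneg_of_le_pi hα₀ (by linarith [pi_pos])
  have hsq : z.re ^ 2 - (‖z‖ * cos α) ^ 2 = (sin α * z.re) ^ 2 - (|z.im| * cos α) ^ 2 := by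
    rw [mul_pow, Complex.sq_norm, Complex.normSq_apply, mul_pow, mul_pow, sq_abs, sin_sq]
    ring
  rw [tan_eq_sin_div_cos, div_mul_eq_mul_div, lt_div_iff₀ hcos,
    ← sq_lt_sq₀ (by positivity : 0 ≤ |z.im| * cos α) (by positivity),
    ← sq_lt_sq₀ (by positivity) hz.le, ← sub_pos, hsq, sub_pos]

lemma circularSector_inter_re_lt_eq_preimage {R α : ℝ} (hα₀ : 0 ≤ α) (hα : α < π / 2) :
    circularSector R α ∩ {z | z.re < R * cos α} = Complex.measurableEquivRealProd ⁻¹'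
      regionBetween (fun x => -tan α * x) (fun x => tan α * x) (Ioo 0 (R * cos α)) := by
  have hcos : 0 < cos α := cos_pos_of_mem_Ioo ⟨by linarith [pi_pos], hα⟩
  ext z
  have hz : z ∈ circularSector R α ∩ {z | z.re < R * cos α} ↔
      0 < z.re ∧ ‖z‖ * cos α < z.re ∧ z.re < R * cos α := by
    refine ⟨fun ⟨⟨_, h⟩, h'⟩ => ⟨(by positivity : 0 ≤ ‖z‖ * cos α).trans_lt h, h, h'⟩,
      fun ⟨_, h, h'⟩ => ⟨⟨?_, h⟩, h'⟩⟩
    exact mem_ball_zero_iff.2 (lt_of_mul_lt_mul_right (h.trans h') hcos.le)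
  rw [hz]
  change _ ↔ (0 < z.re ∧ z.re < R * cos α) ∧ -tan α * z.re < z.im ∧ z.im < tan α * z.re
  rw [and_assoc, and_congr_right_iff]
  intro hre
  rw [norm_mul_cos_lt_re_iff hα₀ hα hre, abs_lt, neg_mul, and_comm]

lemma volume_circularSector_inter_re_lt {R α : ℝ} (hR : 0 ≤ R) (hα₀ : 0 ≤ α) (hα : α < π / 2) :
    volume (circularSector R α ∩ {z | z.re < R * cos α}) =
      ENNReal.ofReal (R ^ 2 * (sin α * cos α)) := by
  have hcos : 0 < cos α := cos_pos_of_mem_Ioo ⟨by linarith [pi_pos], hα⟩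
  have htan : 0 ≤ tan α := tan_nonneg_of_nonneg_of_le_pi_div_two hα₀ hα.le
  have hint : ∀ k : ℝ, IntegrableOn (fun x => k * x) (Ioo 0 (R * cos α)) := fun k =>
    (continuous_const_mul k).integrableOn_Icc.mono_set Ioo_subset_Icc_self
  rw [circularSector_inter_re_lt_eq_preimage hα₀ hα,
    Complex.volume_preserving_equiv_real_prod.measure_preimage_equiv, Measure.volume_eq_prod,
    volume_regionBetween_eq_integral (hint _) (hint _) measurableSet_Ioo
      fun x hx => mul_le_mul_of_nonneg_right (neg_le_self htan) hx.1.le]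
  congr 1
  calc ∫ x in Ioo 0 (R * cos α), ((fun x => tan α * x) - fun x => -tan α * x) x
      = ∫ x in 0..R * cos α, 2 * tan α * x := by
        rw [intervalIntegral.integral_of_le (by positivity), integral_Ioc_eq_integral_Ioo]
        refine integral_congr_ae (.of_forall fun x => ?_)
        simp only [Pi.sub_apply]
        ring
    _ = R ^ 2 * (tan α * cos α * cos α) := by
        rw [intervalIntegral.integral_const_mul, integral_id]
        ring
    _ = R ^ 2 * (sin α * cos α) := by rw [tan_mul_cos hcos.ne']

/-- The ratio of the area of a regular hexagon to the area of its circumscribed disk. -/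
noncomputable def hexagonDiskRatio : ℝ := 3 * √3 / (2 * π)

lemma hexagonDiskRatio_nonneg : 0 ≤ hexagonDiskRatio := by
  unfold hexagonDiskRatio
  positivity

-- On `[0, π / 3]` the concave function `sin` lies above its chord.
lemma hexagonDiskRatio_mul_le_sin_mul_cos {α : ℝ} (hα₀ : 0 ≤ α) (hα : α ≤ π / 6) :
    hexagonDiskRatio * α ≤ sin α * cos α := by
  have hchord := strictConcaveOn_sin_Icc.concaveOn.2 ⟨le_rfl, pi_pos.le⟩
    (⟨by positivity, by linarith [pi_pos]⟩ : π / 3 ∈ Icc 0 π)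
    (sub_nonneg.2 ((div_le_one pi_pos).2 (by linarith)) : 0 ≤ 1 - 6 * α / π)
    (by positivity : 0 ≤ 6 * α / π) (by ring)
  have htwo : 6 * α / π * (π / 3) = 2 * α := by field_simp; ring
  simp only [smul_eq_mul, mul_zero, sin_zero, zero_add, sin_pi_div_three, htwo, sin_two_mul]
    at hchord
  have hratio : hexagonDiskRatio * α = 6 * α / π * (√3 / 2) / 2 := by
    rw [hexagonDiskRatio]
    ring
  linarith

lemma hexagonDiskRatio_le_one : hexagonDiskRatio ≤ 1 := by
  have h : √3 ≤ 2 := (sqrt_le_left two_pos.le).2 (by norm_num)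
  rw [hexagonDiskRatio, div_le_one (by positivity)]
  linarith [pi_gt_three]

lemma hexagonDiskRatio_mul_volume_circularSector_le {R α : ℝ} (hR : 0 ≤ R) (hα₀ : 0 ≤ α)
    (hα : α ≤ π / 6) :
    ENNReal.ofReal hexagonDiskRatio * volume (circularSector R α) ≤
      volume (circularSector R α ∩ {z | z.re < R * cos α}) := by
  rw [volume_circularSector hR hα₀ (by linarith [pi_pos]),
    volume_circularSector_inter_re_lt hR hα₀ (by linarith [pi_pos]),
    ← ENNReal.ofReal_mul hexagonDiskRatio_nonneg, mul_left_comm]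
  exact ENNReal.ofReal_le_ofReal <|
    mul_le_mul_of_nonneg_left (hexagonDiskRatio_mul_le_sin_mul_cos hα₀ hα) (sq_nonneg R)

end ComplexSector

section TruncatedVoronoiCell

/-- The points of the ball of radius `R` about `c` that are strictly nearer to `c` than to every
other point of `C`: the part of the open Voronoi cell of `c` within distance `R`. -/
def truncatedVoronoiCell {X : Type*} [PseudoMetricSpace X] (R : ℝ) (C : Set X) (c : X) : Set X :=
  ball c R ∩ {x | ∀ c' ∈ C, c' ≠ c → dist x c < dist x c'}

variable {X : Type*} [PseudoMetricSpace X] (R : ℝ) (C : Set X)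

lemma pairwiseDisjoint_truncatedVoronoiCell : C.PairwiseDisjoint (truncatedVoronoiCell R C) :=
  fun c hc c' hc' hne => disjoint_left.2 fun _ hx hx' =>
    lt_asymm (hx.2 c' hc' hne.symm) (hx'.2 c hc hne)

variable {C} in
lemma measurableSet_truncatedVoronoiCell [MeasurableSpace X] [OpensMeasurableSpace X]
    (hC : C.Countable) (c : X) : MeasurableSet (truncatedVoronoiCell R C c) := by
  refine measurableSet_ball.inter ?_
  simp only [ofPred_forall]
  exact .biInter hC fun c' _ => .iInter fun _ =>
    (isOpen_lt (by fun_prop) (by fun_prop)).measurableSet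

lemma countable_of_pairwise_le_dist [TopologicalSpace.SeparableSpace X] {ε : ℝ} (hε : 0 < ε)
    (hC : C.Pairwise fun c c' => ε ≤ dist c c') : C.Countable :=
  PairwiseDisjoint.countable_of_isOpen (s := fun c => ball c (ε / 2))
    (fun _ hc _ hc' hne => ball_disjoint_ball (by linarith [hC hc hc' hne]))
    (fun _ _ => isOpen_ball) fun _ _ => nonempty_ball.2 (half_pos hε)

end TruncatedVoronoiCell

section MeasureComparison

open MeasureTheory
open scoped ENNReal

lemma mul_measure_le_of_pairwiseDisjoint {α ι : Type*} [MeasurableSpace α] {μ : Measure α}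
    {k : ℝ≥0∞} (hk : k ≤ 1) {I : Set ι} (hI : I.Countable) {S : ι → Set α}
    (hS : ∀ i ∈ I, MeasurableSet (S i)) (hdisj : I.PairwiseDisjoint S) {B T : Set α}
    (hin : ∀ i ∈ I, k * μ (S i) ≤ μ (S i ∩ T)) (hout : B \ ⋃ i ∈ I, S i ⊆ T) :
    k * μ B ≤ μ T := by
  set U := ⋃ i ∈ I, S i with hU
  have hUm : MeasurableSet U := .biUnion hI hS
  have hUT : k * μ U ≤ μ (T ∩ U) := by
    calc k * μ U = ∑' i : I, k * μ (S i) := by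
          rw [hU, measure_biUnion hI hdisj hS, ENNReal.tsum_mul_left]
      _ ≤ ∑' i : I, μ.restrict T (S i) := ENNReal.tsum_le_tsum fun i =>
          (hin i i.2).trans_eq (Measure.restrict_apply (hS i i.2)).symm
      _ = μ (T ∩ U) := by
          rw [← measure_biUnion hI hdisj hS, Measure.restrict_apply hUm, inter_comm]
  calc k * μ B = k * μ (B ∩ U) + k * μ (B \ U) := by
        rw [← mul_add, measure_inter_add_sdiff B hUm]
    _ ≤ k * μ U + 1 * μ (T \ U) := by
        gcongr k * μ ?_ + ?_ * μ ?_
        · exact inter_subset_right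
        · exact subset_sdiff.2 ⟨hout, disjoint_sdiff_left⟩
    _ ≤ μ (T ∩ U) + μ (T \ U) := by
        rw [one_mul]
        gcongr
    _ = μ T := measure_inter_add_sdiff T hUm

end MeasureComparison

section BisectorSector

variable {V : Type*} [NormedAddCommGroup V] [InnerProductSpace ℝ V] {R : ℝ} {c c' c'' x : V}

lemma dist_sq_eq_add_sub_two_mul_inner (x c c' : V) :
    dist x c' ^ 2 = dist x c ^ 2 + (dist c' c ^ 2 - 2 * inner ℝ (x - c) (c' - c)) := by
  simp only [dist_eq_norm]
  rw [← sub_sub_sub_cancel_right x c' c, norm_sub_sq_real]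
  ring

lemma dist_lt_dist_iff_two_mul_inner_lt :
    dist x c < dist x c' ↔ 2 * inner ℝ (x - c) (c' - c) < dist c' c ^ 2 := by
  rw [← sq_lt_sq₀ dist_nonneg dist_nonneg, dist_sq_eq_add_sub_two_mul_inner x c c',
    lt_add_iff_pos_right, sub_pos]

lemma dist_lt_dist_iff_lt_two_mul_inner :
    dist x c' < dist x c ↔ dist c' c ^ 2 < 2 * inner ℝ (x - c) (c' - c) := by
  rw [← sq_lt_sq₀ dist_nonneg dist_nonneg, dist_sq_eq_add_sub_two_mul_inner x c c',
    add_lt_iff_neg_left, sub_neg]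

-- The difference of the two sides is `‖(a - p) + (b - p) + (c - p)‖ ^ 2`.
lemma sum_dist_sq_le_three_mul_sum_dist_sq (p a b c : V) :
    dist a b ^ 2 + dist a c ^ 2 + dist b c ^ 2 ≤
      3 * (dist a p ^ 2 + dist b p ^ 2 + dist c p ^ 2) := by
  have hab := dist_sq_eq_add_sub_two_mul_inner a p b
  have hac := dist_sq_eq_add_sub_two_mul_inner a p c
  have hbc := dist_sq_eq_add_sub_two_mul_inner b p c
  have hsum := sq_nonneg ‖(a - p) + (b - p) + (c - p)‖
  rw [norm_add_sq_real, norm_add_sq_real, inner_add_left, ← dist_eq_norm, ← dist_eq_norm,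
    ← dist_eq_norm] at hsum
  linarith

/-- The radial projection of `x` to the sphere of radius `R` about `c`. -/
noncomputable def radialProjection (R : ℝ) (c x : V) : V := c + (R / dist x c) • (x - c)

lemma dist_radialProjection (hR : 0 ≤ R) (hx : x ≠ c) : dist (radialProjection R c x) c = R := by
  rw [radialProjection, dist_self_add_left, norm_smul, ← dist_eq_norm,
    Real.norm_of_nonneg (by positivity), div_mul_cancel₀ R (dist_ne_zero.2 hx)]

/-- The sector of the ball of radius `R` about `c` formed by the points whose radial projection to
the sphere is nearer to `c'` than to `c`, a condition stated here without dividing by `dist x c`. -/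
def bisectorSector (R : ℝ) (c c' : V) : Set V :=
  ball c R ∩ {x | dist x c * dist c' c ^ 2 < 2 * R * inner ℝ (x - c) (c' - c)}

lemma isOpen_bisectorSector (R : ℝ) (c c' : V) : IsOpen (bisectorSector R c c') :=
  isOpen_ball.inter (isOpen_lt (by fun_prop) (by fun_prop))

lemma dist_lt_dist_of_notMem_bisectorSector (hne : c' ≠ c) (hx : x ∈ ball c R)
    (hxS : x ∉ bisectorSector R c c') : dist x c < dist x c' := by
  have hinner : 2 * R * inner ℝ (x - c) (c' - c) ≤ dist x c * dist c' c ^ 2 :=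
    not_lt.1 fun h => hxS ⟨hx, h⟩
  have hdist : dist x c * dist c' c ^ 2 < R * dist c' c ^ 2 :=
    mul_lt_mul_of_pos_right hx (pow_pos (dist_pos.2 hne) 2)
  rw [dist_lt_dist_iff_two_mul_inner_lt]
  exact lt_of_mul_lt_mul_left (by linarith : R * (2 * _) < R * _) (pos_of_mem_ball hx).le

lemma ne_of_mem_bisectorSector (hx : x ∈ bisectorSector R c c') : x ≠ c := by
  rintro rfl
  simpa [bisectorSector] using hx.2

lemma dist_radialProjection_lt_of_mem_bisectorSector (hx : x ∈ bisectorSector R c c') :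
    dist (radialProjection R c x) c' < R := by
  have hR : 0 < R := pos_of_mem_ball hx.1
  have hxc : 0 < dist x c := dist_pos.2 (ne_of_mem_bisectorSector hx)
  suffices dist (radialProjection R c x) c' < dist (radialProjection R c x) c by
    rwa [dist_radialProjection hR.le (ne_of_mem_bisectorSector hx)] at this
  rw [dist_lt_dist_iff_lt_two_mul_inner, radialProjection, add_sub_cancel_left,
    real_inner_smul_left, div_mul_eq_mul_div, mul_div_assoc', lt_div_iff₀' hxc, ← mul_assoc]
  exact hx.2

-- A point `p` at distance `R` from `c` and less than `R` from `c'` and `c''` would give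
-- `3 * (dist c p ^ 2 + dist c' p ^ 2 + dist c'' p ^ 2) < 9 * R ^ 2`.
lemma disjoint_bisectorSector
    (hsum : 9 * R ^ 2 ≤ dist c c' ^ 2 + dist c c'' ^ 2 + dist c' c'' ^ 2) :
    Disjoint (bisectorSector R c c') (bisectorSector R c c'') := by
  refine disjoint_left.2 fun x hx hx' => hsum.not_gt ?_
  set p := radialProjection R c x
  have hc : dist c p = R := by
    rw [dist_comm, dist_radialProjection (pos_of_mem_ball hx.1).le (ne_of_mem_bisectorSector hx)]
  have hc' : dist c' p ^ 2 < R ^ 2 := by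
    rw [dist_comm]
    gcongr
    exact dist_radialProjection_lt_of_mem_bisectorSector hx
  have hc'' : dist c'' p ^ 2 < R ^ 2 := by
    rw [dist_comm]
    gcongr
    exact dist_radialProjection_lt_of_mem_bisectorSector hx'
  have hleibniz := sum_dist_sq_le_three_mul_sum_dist_sq p c c' c''
  rw [hc] at hleibniz
  linarith

lemma bisectorSector_eq_empty (h : 2 * R ≤ dist c c') : bisectorSector R c c' = ∅ := by
  refine eq_empty_of_forall_notMem fun x hx => lt_irrefl (dist x c * dist c' c ^ 2) ?_
  have hR : 0 < R := pos_of_mem_ball hx.1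
  calc dist x c * dist c' c ^ 2 < 2 * R * inner ℝ (x - c) (c' - c) := hx.2
    _ ≤ 2 * R * (dist x c * dist c' c) := by
        rw [dist_eq_norm, dist_eq_norm]
        gcongr
        exact real_inner_le_norm _ _
    _ ≤ dist c' c * (dist x c * dist c' c) := by
        rw [dist_comm c' c]
        gcongr
    _ = dist x c * dist c' c ^ 2 := by ring

end BisectorSector

section ComplexCoordinate

open Real

variable {V : Type*} [NormedAddCommGroup V] [InnerProductSpace ℝ V]
  {φ : V ≃ₗᵢ[ℝ] ℂ} {R α : ℝ} {c c' : V}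

lemma inner_sub_sub_eq_re_mul_dist (hφ : φ (c' - c) = ‖c' - c‖) (x : V) :
    inner ℝ (x - c) (c' - c) = (φ (x - c)).re * dist c' c := by
  rw [← φ.inner_map_map, hφ, Complex.inner, dist_eq_norm]
  simp [mul_comm]

lemma bisectorSector_eq_preimage (hφ : φ (c' - c) = ‖c' - c‖) (hR : 0 < R) (hne : c' ≠ c)
    (hα : dist c' c = 2 * R * cos α) :
    bisectorSector R c c' = (fun x => φ (x - c)) ⁻¹' circularSector R α := by
  ext x
  have hd : 0 < 2 * R * dist c' c := mul_pos (by positivity) (dist_pos.2 hne)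
  have hl : dist x c * dist c' c ^ 2 = 2 * R * dist c' c * (‖φ (x - c)‖ * cos α) := by
    rw [φ.norm_map, ← dist_eq_norm, pow_two]
    nth_rw 1 [hα]
    ring
  have hr : 2 * R * inner ℝ (x - c) (c' - c) = 2 * R * dist c' c * (φ (x - c)).re := by
    rw [inner_sub_sub_eq_re_mul_dist hφ]
    ring
  simp only [bisectorSector, circularSector, mem_inter_iff, mem_preimage, mem_ofPred_eq, hl, hr,
    mul_lt_mul_iff_right₀ hd, mem_ball_iff_norm, sub_zero, φ.norm_map]

lemma setOf_dist_lt_dist_eq_preimage (hφ : φ (c' - c) = ‖c' - c‖) (hne : c' ≠ c)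
    (hα : dist c' c = 2 * R * cos α) :
    {x | dist x c < dist x c'} = (fun x => φ (x - c)) ⁻¹' {z | z.re < R * cos α} := by
  ext x
  have hd : 0 < 2 * dist c' c := mul_pos two_pos (dist_pos.2 hne)
  have hl : 2 * inner ℝ (x - c) (c' - c) = 2 * dist c' c * (φ (x - c)).re := by
    rw [inner_sub_sub_eq_re_mul_dist hφ]
    ring
  have hr : dist c' c ^ 2 = 2 * dist c' c * (R * cos α) := by
    rw [pow_two]
    nth_rw 2 [hα]
    ring
  rw [mem_ofPred_eq, dist_lt_dist_iff_two_mul_inner_lt, hl, hr, mul_lt_mul_iff_right₀ hd,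
    mem_preimage, mem_ofPred_eq]

end ComplexCoordinate

section SectorArea

open MeasureTheory Module Real

variable {V : Type*} [NormedAddCommGroup V] [InnerProductSpace ℝ V] [Fact (finrank ℝ V = 2)]

lemma exists_linearIsometryEquiv_complex_eq_norm (w : V) : ∃ φ : V ≃ₗᵢ[ℝ] ℂ, φ w = ‖w‖ := by
  have : FiniteDimensional ℝ V := .of_fact_finrank_eq_two
  let e : V ≃ₗᵢ[ℝ] ℂ := ((stdOrthonormalBasis ℝ V).reindex
    (finCongr Fact.out)).equiv Complex.orthonormalBasisOneI (.refl _)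
  refine ⟨e.trans (rotation (Circle.exp (-(e w).arg))), ?_⟩
  rw [LinearIsometryEquiv.trans_apply, rotation_apply, Circle.coe_exp, ← e.norm_map w]
  nth_rw 2 [← Complex.norm_mul_exp_arg_mul_I (e w)]
  rw [mul_left_comm, ← Complex.exp_add]
  simp

variable [MeasurableSpace V] [BorelSpace V] [FiniteDimensional ℝ V]

lemma hexagonDiskRatio_mul_volume_bisectorSector_le {R : ℝ} {c c' : V}
    (hd : √3 * R ≤ dist c c') :
    ENNReal.ofReal hexagonDiskRatio * volume (bisectorSector R c c') ≤
      volume (bisectorSector R c c' ∩ {x | dist x c < dist x c'}) := by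
  rcases le_or_gt (2 * R) (dist c c') with hle | hlt
  · simp [bisectorSector_eq_empty hle]
  have hR : 0 < R := by linarith [dist_nonneg (x := c) (y := c')]
  have hne : c' ≠ c := (dist_pos.1 (hd.trans_lt' (by positivity))).symm
  set α := arccos (dist c' c / (2 * R))
  have hcos : cos α = dist c' c / (2 * R) :=
    cos_arccos (by linarith [(by positivity : 0 ≤ dist c' c / (2 * R))])
      ((div_le_one (by positivity)).2 (dist_comm c c' ▸ hlt.le))
  have hdist : dist c' c = 2 * R * cos α := by rw [hcos, mul_div_cancel₀ _ (by positivity)]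
  have hα : α ≤ π / 6 := by
    rw [← strictAntiOn_cos.le_iff_ge ⟨by positivity, by linarith [pi_pos]⟩
      ⟨arccos_nonneg _, arccos_le_pi _⟩, hcos, cos_pi_div_six, le_div_iff₀ (by positivity)]
    linarith [dist_comm c c']
  obtain ⟨φ, hφ⟩ := exists_linearIsometryEquiv_complex_eq_norm (c' - c)
  have hφc : MeasurePreserving (fun x => φ (x - c)) :=
    φ.measurePreserving.comp (measurePreserving_sub_right volume c)
  have hmeas := measurableSet_circularSector R α
  have hmeas' : MeasurableSet {z : ℂ | z.re < R * cos α} :=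
    measurableSet_lt (by fun_prop) (by fun_prop)
  rw [bisectorSector_eq_preimage hφ hR hne hdist, setOf_dist_lt_dist_eq_preimage hφ hne hdist,
    ← preimage_inter, hφc.measure_preimage hmeas.nullMeasurableSet,
    hφc.measure_preimage (hmeas.inter hmeas').nullMeasurableSet]
  exact hexagonDiskRatio_mul_volume_circularSector_le hR.le (arccos_nonneg _) hα

lemma volume_ball_of_finrank_eq_two (c : V) {R : ℝ} (hR : 0 ≤ R) :
    volume (ball c R) = ENNReal.ofReal (π * R ^ 2) := by
  have hV : finrank ℝ V = 2 := Fact.out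
  have : Nontrivial V := nontrivial_of_finrank_pos (R := ℝ) (by lia)
  rw [InnerProductSpace.volume_ball_of_dim_even (k := 1) hV, hV, ← ENNReal.ofReal_pow hR,
    ← ENNReal.ofReal_mul (by positivity)]
  simp [mul_comm]

lemma hexagon_le_volume_truncatedVoronoiCell {R : ℝ} (hR : 0 < R) {C : Set V}
    (hC : C.Pairwise fun c c' => √3 * R ≤ dist c c') {c : V} (hc : c ∈ C) :
    ENNReal.ofReal (3 * √3 / 2 * R ^ 2) ≤ volume (truncatedVoronoiCell R C c) := by
  have hcount : (C \ {c}).Countable :=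
    (countable_of_pairwise_le_dist C (by positivity) hC).mono sdiff_subset
  have hsq : ∀ {a b : V}, √3 * R ≤ dist a b → 3 * R ^ 2 ≤ dist a b ^ 2 := fun {a b} h => by
    simpa [mul_pow] using pow_le_pow_left₀ (by positivity) h 2
  have hdisj : (C \ {c}).PairwiseDisjoint (bisectorSector R c) :=
    fun a ha b hb hab => disjoint_bisectorSector <| by
      linarith [hsq (hC hc ha.1 (Ne.symm ha.2)), hsq (hC hc hb.1 (Ne.symm hb.2)),
        hsq (hC ha.1 hb.1 hab)]
  calc ENNReal.ofReal (3 * √3 / 2 * R ^ 2)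
      = ENNReal.ofReal hexagonDiskRatio * volume (ball c R) := by
        rw [volume_ball_of_finrank_eq_two c hR.le, ← ENNReal.ofReal_mul hexagonDiskRatio_nonneg,
          hexagonDiskRatio]
        congr 1
        field_simp
    _ ≤ volume (truncatedVoronoiCell R C c) := by
        refine mul_measure_le_of_pairwiseDisjoint
          (ENNReal.ofReal_le_one.2 hexagonDiskRatio_le_one) hcount
          (fun a _ => (isOpen_bisectorSector R c a).measurableSet) hdisj
          (fun a ha => (hexagonDiskRatio_mul_volume_bisectorSector_le
            (hC hc ha.1 (Ne.symm ha.2))).trans (measure_mono ?_)) ?_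
        · rintro x ⟨hxa, hx⟩
          refine ⟨hxa, hxa.1, fun b hb hbc => ?_⟩
          obtain rfl | hba := eq_or_ne b a
          · exact hx
          · exact dist_lt_dist_of_notMem_bisectorSector hbc hxa.1
              fun hxb => disjoint_left.1 (hdisj ⟨hb, hbc⟩ ha hba) hxb hxa
        · rintro x ⟨hxR, hx⟩
          exact ⟨hxR, fun b hb hbc => dist_lt_dist_of_notMem_bisectorSector hbc hxR
            fun hxb => hx (mem_biUnion ⟨hb, hbc⟩ hxb)⟩

end SectorArea

section DiskCovering

open MeasureTheory Module Real

variable {V : Type*} [NormedAddCommGroup V] [InnerProductSpace ℝ V] [Fact (finrank ℝ V = 2)]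
  [MeasurableSpace V] [BorelSpace V] [FiniteDimensional ℝ V]

-- `R = 2 * ρ / √3` is the circumradius of the regular hexagon of inradius `ρ`.
lemma volume_closedBall_le_mul_volume_truncatedVoronoiCell {ρ : ℝ} (hρ : 0 < ρ) {C : Set V}
    (hC : C.Pairwise fun c c' => 2 * ρ ≤ dist c c') {c : V} (hc : c ∈ C) :
    volume (closedBall c ρ) ≤
      ENNReal.ofReal (π / √12) * volume (truncatedVoronoiCell (2 * ρ / √3) C c) := by
  have hsep : C.Pairwise fun c c' => √3 * (2 * ρ / √3) ≤ dist c c' := by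
    simpa only [mul_div_cancel₀ (2 * ρ) (by positivity : √3 ≠ 0)] using hC
  have h12 : √12 = 2 * √3 := by
    rw [show (12 : ℝ) = 2 ^ 2 * 3 by norm_num, sqrt_mul (by positivity), sqrt_sq two_pos.le]
  have : Nontrivial V := nontrivial_of_finrank_eq_succ (R := ℝ) (n := 1) Fact.out
  calc volume (closedBall c ρ) = ENNReal.ofReal (π * ρ ^ 2) := by
        rw [Measure.addHaar_closedBall_eq_addHaar_ball, volume_ball_of_finrank_eq_two c hρ.le]
    _ = ENNReal.ofReal (π / √12) * ENNReal.ofReal (3 * √3 / 2 * (2 * ρ / √3) ^ 2) := by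
        rw [← ENNReal.ofReal_mul (by positivity), h12, div_pow, sq_sqrt three_pos.le]
        congr 1
        field_simp
    _ ≤ ENNReal.ofReal (π / √12) * volume (truncatedVoronoiCell (2 * ρ / √3) C c) := by
        gcongr
        exact hexagon_le_volume_truncatedVoronoiCell (by positivity) hsep hc

lemma volume_biUnion_closedBall_inter_le {ρ : ℝ} (hρ : 0 < ρ) {C : Set V}
    (hC : C.Pairwise fun c c' => 2 * ρ ≤ dist c c') (A : Set V) :
    volume ((⋃ c ∈ C, closedBall c ρ) ∩ A) ≤
      ENNReal.ofReal (π / √12) * volume (thickening (3 * ρ) A) := by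
  set R := 2 * ρ / √3
  have hRρ : R ≤ 2 * ρ := div_le_self (by positivity) (one_le_sqrt.2 (by norm_num))
  set C' := {c ∈ C | (closedBall c ρ ∩ A).Nonempty}
  have hsub : C' ⊆ C := sep_subset _ _
  have hcount : C.Countable := countable_of_pairwise_le_dist C (by positivity) hC
  have hcover : (⋃ c ∈ C, closedBall c ρ) ∩ A ⊆ ⋃ c ∈ C', closedBall c ρ := by
    rintro x ⟨hx, hxA⟩
    obtain ⟨c, hc, hxc⟩ := mem_iUnion₂.1 hx
    exact mem_biUnion ⟨hc, x, hxc, hxA⟩ hxc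
  have hcell : ⋃ c ∈ C', truncatedVoronoiCell R C c ⊆ thickening (3 * ρ) A := by
    refine iUnion₂_subset fun c ⟨_, y, hyc, hyA⟩ x hx => mem_thickening_iff.2 ⟨y, hyA, ?_⟩
    have hxc : dist x c < R := hx.1
    linarith [dist_triangle_right x y c, mem_closedBall.1 hyc]
  calc volume ((⋃ c ∈ C, closedBall c ρ) ∩ A) ≤ volume (⋃ c ∈ C', closedBall c ρ) :=
        measure_mono hcover
    _ ≤ ∑' c : C', volume (closedBall (c : V) ρ) := measure_biUnion_le _ (hcount.mono hsub) _
    _ ≤ ∑' c : C', ENNReal.ofReal (π / √12) * volume (truncatedVoronoiCell R C c) :=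
        ENNReal.tsum_le_tsum fun c =>
          volume_closedBall_le_mul_volume_truncatedVoronoiCell hρ hC (hsub c.2)
    _ = ENNReal.ofReal (π / √12) * volume (⋃ c ∈ C', truncatedVoronoiCell R C c) := by
        rw [ENNReal.tsum_mul_left, measure_biUnion (hcount.mono hsub)
          ((pairwiseDisjoint_truncatedVoronoiCell R C).subset hsub)
          fun c _ => measurableSet_truncatedVoronoiCell R hcount c]
    _ ≤ ENNReal.ofReal (π / √12) * volume (thickening (3 * ρ) A) := by
        gcongr

end DiskCovering

section Square

open MeasureTheory

lemma volume_square {r : ℝ} (hr : 0 ≤ r) : volume (square r) = ENNReal.ofReal (4 * r ^ 2) := by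
  have hsquare : square r = WithLp.ofLp ⁻¹' Icc (fun _ : Fin 2 => -r) fun _ => r := by
    ext x
    simp only [square, mem_ofPred_eq, mem_preimage, mem_Icc, Pi.le_def, Fin.forall_fin_two, abs_le]
    tauto
  rw [hsquare, (PiLp.volume_preserving_ofLp (Fin 2)).measure_preimage
    measurableSet_Icc.nullMeasurableSet, Real.volume_Icc_pi, Fin.prod_univ_two,
    ← ENNReal.ofReal_mul (by linarith)]
  ring_nf

lemma thickening_square_subset (δ r : ℝ) : thickening δ (square r) ⊆ square (r + δ) := by
  intro x hx
  obtain ⟨y, hy, hxy⟩ := mem_thickening_iff.1 hx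
  have hcoord : ∀ i, |x i| ≤ |y i| + δ := fun i => by
    have hi : |x i - y i| ≤ dist x y := by
      simpa [dist_eq_norm] using PiLp.norm_apply_le (x - y) i
    linarith [abs_sub_abs_le_abs_sub (x i) (y i)]
  exact ⟨by linarith [hcoord 0, hy.1], by linarith [hcoord 1, hy.2]⟩

end Square

section Packing

open MeasureTheory Filter Topology

lemma IsPacking.radius_add_radius_le_dist {P : Set Disk} (hP : IsPacking P) {d d' : Disk}
    (hd : d ∈ P) (hd' : d' ∈ P) (hne : d ≠ d') :
    d.radius + d'.radius ≤ dist d.center d'.center := by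
  have hdisj := hP d hd d' hd' hne
  rwa [Disk.set, Disk.set, interior_closedBall _ d.radius_pos.ne',
    interior_closedBall _ d'.radius_pos.ne',
    disjoint_ball_ball_iff d.radius_pos d'.radius_pos] at hdisj

lemma packingUnion_eq_biUnion_closedBall {P : Set Disk} {ρ : ℝ} (hρ : ∀ d ∈ P, d.radius = ρ) :
    packingUnion P = ⋃ c ∈ Disk.center '' P, closedBall c ρ := by
  rw [biUnion_image]
  exact iUnion₂_congr fun d hd => by rw [Disk.set, hρ d hd]

lemma density_le_of_volume_inter_square_le {P : Set Disk} {a k : ℝ} (ha : 0 ≤ a)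
    (h : ∀ r, volume (packingUnion P ∩ square r) ≤ ENNReal.ofReal a * volume (square (r + k))) :
    density P ≤ a := by
  have hlim : Tendsto (fun r : ℝ => a * (1 + k * r⁻¹) ^ 2) atTop (𝓝 a) := by
    simpa using (((tendsto_inv_atTop_zero.const_mul k).const_add 1).pow 2).const_mul a
  rw [density, ← hlim.limsup_eq]
  refine limsup_le_limsup ?_
    (IsCoboundedUnder.of_frequently_ge (a := 0) (.of_forall fun r => by positivity))
    hlim.isBoundedUnder_le
  filter_upwards [eventually_gt_atTop 0, eventually_ge_atTop (-k)] with r hr hrk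
  have hvol := h r
  rw [volume_square (by linarith), ← ENNReal.ofReal_mul ha] at hvol
  rw [div_le_iff₀ (by positivity)]
  refine (ENNReal.toReal_le_of_le_ofReal (by positivity) hvol).trans_eq ?_
  field_simp

theorem density_le_of_unit_packing_general (P : Set Disk) (hP : IsPacking P)
    (hradii : ∀ d ∈ P, ∀ d' ∈ P, d.radius = d'.radius) :
    density P ≤ Real.pi / √12 := by
  obtain rfl | ⟨d₀, hd₀⟩ := P.eq_empty_or_nonempty
  · refine density_le_of_volume_inter_square_le (k := 0) (by positivity) fun r => ?_
    simp [packingUnion]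
  have : Fact (Module.finrank ℝ Plane = 2) := ⟨finrank_euclideanSpace_fin⟩
  have hρ : ∀ d ∈ P, d.radius = d₀.radius := fun d hd => hradii d hd d₀ hd₀
  have hsep : (Disk.center '' P).Pairwise fun c c' => 2 * d₀.radius ≤ dist c c' := by
    rintro _ ⟨d, hd, rfl⟩ _ ⟨d', hd', rfl⟩ hne
    have hdist := hP.radius_add_radius_le_dist hd hd' (ne_of_apply_ne _ hne)
    rwa [hρ d hd, hρ d' hd', ← two_mul] at hdist
  refine density_le_of_volume_inter_square_le (k := 3 * d₀.radius) (by positivity)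
    fun r => ?_
  rw [packingUnion_eq_biUnion_closedBall hρ]
  refine (volume_biUnion_closedBall_inter_le d₀.radius_pos hsep _).trans ?_
  gcongr
  exact thickening_square_subset _ _

end Packing

/-- every packing by disks of radius 1 has density at most `π/√12`. -/
theorem density_le_of_unit_packing (P : Set Disk) (hP : IsPacking P)
    (hradii : ∀ d ∈ P, d.radius = 1) :
    density P ≤ Real.pi / Real.sqrt 12 :=
  density_le_of_unit_packing_general P hP fun d hd d' hd' =>
    (hradii d hd).trans (hradii d' hd').symm
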